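/- Let K < 0, n ≥ 2, and x_1, …, x_n ∈ ℍ^d_K, and let x̄ = (1/n)∑_{i=1}^n x_i be their Euclidean mean. Then K·⟨x̄,x̄⟩_L ≥ 1, with equality if and only if all x_i are identical; in particular ⟨x̄,x̄⟩_L < 0 and x̄_0 > 0, so x̄ is projectable onto the hyperboloid. -/

import Mathlib

/-!
Bilinearity gives `K⟨x̄,x̄⟩ - 1 = n⁻² ∑ᵢ ∑ⱼ (K⟨xᵢ,xⱼ⟩ - 1)`, so everything reduces to the reverse
Cauchy–Schwarz inequality `K⟨x,y⟩ ≥ 1` on the hyperboloid, with equality only for `x = y`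
(`onHyperboloid.one_le`, `onHyperboloid.eq_of_eq_one`). Both follow from the identity
`onHyperboloid.identity`, which writes `2 x₀ y₀ (K⟨x,y⟩ - 1)` as a sum of squares with positive
weights.
-/

noncomputable section

/-- Lorentzian inner product on ℝ^{d+1}: ⟨x,y⟩_L = −x₀y₀ + ∑_{i=1}^d xᵢyᵢ. -/
def lorentzInner {d : ℕ} (x y : Fin (d + 1) → ℝ) : ℝ :=
  (∑ i, x i * y i) - 2 * x 0 * y 0

/-- Membership in the Lorentz model ℍ^d_K: ⟨x,x⟩_L = 1/K and x₀ > 0. -/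
def onHyperboloid {d : ℕ} (K : ℝ) (x : Fin (d + 1) → ℝ) : Prop :=
  lorentzInner x x = 1 / K ∧ 0 < x 0

/-- A sum-of-squares form of the reverse Cauchy–Schwarz inequality. The term `i = 0` of the sum
vanishes, so the sum only sees the spatial coordinates. -/
lemma onHyperboloid.identity {d : ℕ} {K : ℝ} (hK : K < 0) {x y : Fin (d + 1) → ℝ}
    (hx : onHyperboloid K x) (hy : onHyperboloid K y) :
    2 * x 0 * y 0 * (K * lorentzInner x y - 1) =
      (x 0 - y 0) ^ 2 + (-K) * ∑ i, (y 0 * x i - x 0 * y i) ^ 2 := by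
  have hexp : ∑ i, (y 0 * x i - x 0 * y i) ^ 2 =
      y 0 ^ 2 * ∑ i, x i * x i - 2 * x 0 * y 0 * ∑ i, x i * y i
        + x 0 ^ 2 * ∑ i, y i * y i := by
    simp only [Finset.mul_sum, ← Finset.sum_sub_distrib, ← Finset.sum_add_distrib]
    exact Finset.sum_congr rfl fun i _ => by ring
  have h1 : ∑ i, x i * x i = 1 / K + 2 * x 0 * x 0 := by
    have := hx.1
    unfold lorentzInner at this
    linarith
  have h2 : ∑ i, y i * y i = 1 / K + 2 * y 0 * y 0 := by
    have := hy.1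
    unfold lorentzInner at this
    linarith
  have hK0 : K ≠ 0 := hK.ne
  rw [hexp, h1, h2]
  unfold lorentzInner
  field_simp
  ring

lemma onHyperboloid.one_le {d : ℕ} {K : ℝ} (hK : K < 0) {x y : Fin (d + 1) → ℝ}
    (hx : onHyperboloid K x) (hy : onHyperboloid K y) : 1 ≤ K * lorentzInner x y := by
  have hid := onHyperboloid.identity hK hx hy
  have hp : 0 < 2 * x 0 * y 0 := mul_pos (mul_pos two_pos hx.2) hy.2
  have hS : 0 ≤ ∑ i, (y 0 * x i - x 0 * y i) ^ 2 := Finset.sum_nonneg fun i _ => sq_nonneg _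
  have h : 0 ≤ 2 * x 0 * y 0 * (K * lorentzInner x y - 1) := by
    rw [hid]
    exact add_nonneg (sq_nonneg _) (mul_nonneg (by linarith) hS)
  linarith [nonneg_of_mul_nonneg_right h hp]

lemma onHyperboloid.eq_of_eq_one {d : ℕ} {K : ℝ} (hK : K < 0) {x y : Fin (d + 1) → ℝ}
    (hx : onHyperboloid K x) (hy : onHyperboloid K y) (h : K * lorentzInner x y = 1) :
    x = y := by
  have hid := onHyperboloid.identity hK hx hy
  rw [h, sub_self, mul_zero] at hid
  have hS : 0 ≤ ∑ i, (y 0 * x i - x 0 * y i) ^ 2 := Finset.sum_nonneg fun i _ => sq_nonneg _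
  have hKS : 0 ≤ (-K) * ∑ i, (y 0 * x i - x 0 * y i) ^ 2 := mul_nonneg (by linarith) hS
  have h0 : x 0 = y 0 := by
    have : (x 0 - y 0) ^ 2 = 0 := le_antisymm (by linarith) (sq_nonneg _)
    linarith [pow_eq_zero_iff two_ne_zero |>.1 this]
  have hS0 : ∑ i, (y 0 * x i - x 0 * y i) ^ 2 = 0 := by
    have : (-K) * ∑ i, (y 0 * x i - x 0 * y i) ^ 2 = 0 :=
      le_antisymm (by linarith [sq_nonneg (x 0 - y 0)]) hKS
    exact (mul_eq_zero.1 this).resolve_left (by linarith)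
  rw [Finset.sum_eq_zero_iff_of_nonneg fun i _ => sq_nonneg _] at hS0
  funext i
  have hi := pow_eq_zero_iff two_ne_zero |>.1 (hS0 i (Finset.mem_univ i))
  rw [h0, ← mul_sub] at hi
  linarith [(mul_eq_zero.1 hi).resolve_left hy.2.ne']

lemma lorentzInner_mean {d n : ℕ} (c : ℝ) (x : Fin n → Fin (d + 1) → ℝ) :
    lorentzInner (c • ∑ i, x i) (c • ∑ i, x i) =
      c ^ 2 * ∑ i, ∑ j, lorentzInner (x i) (x j) := by
  have hsq : ∀ k, (∑ i, x i k) * (∑ j, x j k) = ∑ i, ∑ j, x i k * x j k := fun k =>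
    Finset.sum_mul_sum _ _ _ _
  have hcomm : ∑ i, ∑ j, ∑ k, x i k * x j k = ∑ k, (∑ i, x i k) * (∑ j, x j k) := by
    simp only [hsq]
    symm
    rw [Finset.sum_comm]
    exact Finset.sum_congr rfl fun i _ => Finset.sum_comm
  have h0 : ∑ i, ∑ j, 2 * x i 0 * x j 0 = 2 * ((∑ i, x i 0) * (∑ j, x j 0)) := by
    rw [hsq]
    simp only [Finset.mul_sum, mul_assoc]
  unfold lorentzInner
  simp only [Finset.sum_sub_distrib]
  rw [hcomm, h0]
  simp only [Pi.smul_apply, Finset.sum_apply, smul_eq_mul]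
  rw [mul_sub, Finset.mul_sum (Finset.univ : Finset (Fin (d + 1)))]
  congr 1
  · exact Finset.sum_congr rfl fun k _ => by ring
  · ring

/-- The Euclidean mean x̄ of hyperboloid points satisfies K·⟨x̄,x̄⟩_L ≥ 1
(equality iff all points are identical); in particular ⟨x̄,x̄⟩_L < 0 and x̄₀ > 0,
so x̄ is projectable onto the hyperboloid. -/
theorem euclidean_mean_projectable {d n : ℕ} {K : ℝ} (hK : K < 0) (hn : 2 ≤ n)
    {x : Fin n → Fin (d + 1) → ℝ} (hx : ∀ i, onHyperboloid K (x i)) :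
    1 ≤ K * lorentzInner ((n : ℝ)⁻¹ • ∑ i, x i) ((n : ℝ)⁻¹ • ∑ i, x i) ∧
    (K * lorentzInner ((n : ℝ)⁻¹ • ∑ i, x i) ((n : ℝ)⁻¹ • ∑ i, x i) = 1 ↔
      ∀ i j, x i = x j) ∧
    lorentzInner ((n : ℝ)⁻¹ • ∑ i, x i) ((n : ℝ)⁻¹ • ∑ i, x i) < 0 ∧
    0 < ((n : ℝ)⁻¹ • ∑ i, x i) 0 := by
  have hn0 : (0 : ℝ) < n := by exact_mod_cast (by omega : 0 < n)
  have hnn : (n : ℝ) ≠ 0 := ne_of_gt hn0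
  -- The excess over `1` is the average of the pairwise excesses, all of which are nonnegative.
  have hkey : K * lorentzInner ((n : ℝ)⁻¹ • ∑ i, x i) ((n : ℝ)⁻¹ • ∑ i, x i) - 1 =
      ((n : ℝ)⁻¹) ^ 2 * ∑ i, ∑ j, (K * lorentzInner (x i) (x j) - 1) := by
    rw [lorentzInner_mean]
    simp only [Finset.sum_sub_distrib, ← Finset.mul_sum, Finset.sum_const, Finset.card_univ,
      Fintype.card_fin, nsmul_eq_mul, mul_one]
    field_simp
  have hnonneg : ∀ i j, 0 ≤ K * lorentzInner (x i) (x j) - 1 := fun i j =>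
    sub_nonneg.2 (onHyperboloid.one_le hK (hx i) (hx j))
  have hrow : ∀ i, 0 ≤ ∑ j, (K * lorentzInner (x i) (x j) - 1) := fun i =>
    Finset.sum_nonneg fun j _ => hnonneg i j
  have hone : 1 ≤ K * lorentzInner ((n : ℝ)⁻¹ • ∑ i, x i) ((n : ℝ)⁻¹ • ∑ i, x i) := by
    rw [← sub_nonneg, hkey]
    exact mul_nonneg (sq_nonneg _) (Finset.sum_nonneg fun i _ => hrow i)
  refine ⟨hone, ⟨fun h i j => ?_, fun h => ?_⟩, ?_, ?_⟩
  · rw [h, sub_self] at hkey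
    have hS := (mul_eq_zero.1 hkey.symm).resolve_left (pow_ne_zero 2 (inv_ne_zero hnn))
    rw [Finset.sum_eq_zero_iff_of_nonneg fun i _ => hrow i] at hS
    have hi := hS i (Finset.mem_univ i)
    rw [Finset.sum_eq_zero_iff_of_nonneg fun j _ => hnonneg i j] at hi
    exact onHyperboloid.eq_of_eq_one hK (hx i) (hx j) (sub_eq_zero.1 (hi j (Finset.mem_univ j)))
  · rw [← sub_eq_zero, hkey]
    refine mul_eq_zero_of_right _ (Finset.sum_eq_zero fun i _ => Finset.sum_eq_zero fun j _ => ?_)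
    rw [h j i, (hx i).1, mul_one_div_cancel hK.ne, sub_self]
  · by_contra! hc
    linarith [mul_nonpos_of_nonpos_of_nonneg hK.le hc]
  · simp only [Pi.smul_apply, Finset.sum_apply, smul_eq_mul]
    exact mul_pos (inv_pos.2 hn0)
      (Finset.sum_pos (fun i _ => (hx i).2) ⟨⟨0, by omega⟩, Finset.mem_univ _⟩)
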